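/- Let p₁, …, p_{2r−1} (r ≥ 1) be distinct prime numbers and let d = p₁⋯p_{2r−1}. Let p be a prime number with p ∤ d, p ≡ 3 (mod 8), and such that −p is a quadratic non-residue modulo p_i for every odd p_i dividing d. Then: for every prime number q, the quaternion algebra ℍ[ℚ_q, −p, −d] is a division ring if and only if q divides d; moreover ℍ[ℝ, −p, −d] is a division ring. (Hence ℍ[ℚ,−p,−d] is the definite rational quaternion algebra with discriminant d.) -/

import Mathlib

open Quaternion

/-- A ring is a division ring if it is nontrivial and every nonzero element is invertible. -/
def IsDivisionRingPred (A : Type*) [Ring A] : Prop :=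
  (1 : A) ≠ 0 ∧ ∀ x : A, x ≠ 0 → IsUnit x

/-!
Away from characteristic two, `ℍ[K,a,b]` with `a ≠ 0` is a division ring exactly when the norm
form `x² - a y²` of `K(√a)` does not represent `b`. Take `a = -p` and `b = -d`.

* Over `ℝ` the form is nonnegative while `b` is negative.
* At a prime `q ∣ d` the extension `ℚ_q(√-p)` is unramified of degree two, so norms from it have
  even valuation, whereas `d` has valuation one. For `q = 2` this uses `-p ≡ 5 (mod 8)`, which makes
  `X² + X + (1 + p)/4` irreducible modulo `2`; this polynomial replaces `X² + p`.
* At a prime `q ∤ d` a representation modulo `q` lifts by Hensel's lemma. For odd `q ≠ p` it comes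
  from the pigeonhole principle, for `q = 2` from the same integral form as above, and for `q = p`
  from quadratic reciprocity: each of the `2r - 1` prime factors of `d` is a non-residue modulo `p`,
  and so is `-1`, hence `-d` is a residue.
-/

section QuaternionAlgebra

variable {K : Type*} [Field K]

theorem isDivisionRingPred_quaternionAlgebra_iff_re_mul_star_ne_zero {a b c : K} :
    IsDivisionRingPred ℍ[K,a,b,c] ↔
      ∀ x : ℍ[K,a,b,c], x ≠ 0 → (x * star x).re ≠ 0 := by
  refine ⟨fun h x hx hre => hx ?_, fun h => ⟨one_ne_zero, fun x hx => ?_⟩⟩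
  · have hmul : x * star x = 0 := by
      rw [x.mul_star_eq_coe, hre, QuaternionAlgebra.coe_zero]
    exact star_eq_zero.1 ((h.2 x hx).mul_right_eq_zero.1 hmul)
  · have hunit : IsUnit (x * star x) := by
      rw [x.mul_star_eq_coe]
      exact (IsUnit.mk0 _ (h x hx)).map (algebraMap K ℍ[K,a,b,c])
    have hcomm : Commute x (star x) := (star_comm_self' x).symm
    exact (hcomm.isUnit_mul_iff.1 hunit).1

theorem re_mul_star_quaternionAlgebra {a b : K} (x : ℍ[K,a,b]) :
    (x * star x).re = x.re ^ 2 - a * x.imI ^ 2 - b * (x.imJ ^ 2 - a * x.imK ^ 2) := by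
  simp only [QuaternionAlgebra.re_mul, QuaternionAlgebra.re_star, QuaternionAlgebra.imI_star,
    QuaternionAlgebra.imJ_star, QuaternionAlgebra.imK_star]
  ring

theorem exists_sq_sub_mul_sq_eq_of_isSquare {a : K} (h2 : (2 : K) ≠ 0) (ha : a ≠ 0)
    (hsq : IsSquare a) (b : K) : ∃ x y : K, x ^ 2 - a * y ^ 2 = b := by
  obtain ⟨s, rfl⟩ := hsq
  have hs : s ≠ 0 := left_ne_zero_of_mul ha
  refine ⟨(b + 1) / 2, (b - 1) / (2 * s), ?_⟩
  field_simp
  ring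

theorem eq_zero_and_eq_zero_of_sq_sub_mul_sq_eq_zero {a x y : K} (ha : ¬ IsSquare a)
    (h : x ^ 2 - a * y ^ 2 = 0) : x = 0 ∧ y = 0 := by
  have hy : y = 0 := by
    by_contra hy
    refine ha ⟨x / y, ?_⟩
    field_simp
    linear_combination -h
  subst hy
  exact ⟨by simpa using h, rfl⟩

theorem exists_sq_sub_mul_sq_eq_div {a z w : K} (hzw : z ^ 2 - a * w ^ 2 ≠ 0) (x y : K) :
    ∃ u v : K, u ^ 2 - a * v ^ 2 = (x ^ 2 - a * y ^ 2) / (z ^ 2 - a * w ^ 2) := by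
  set N := z ^ 2 - a * w ^ 2 with hN
  refine ⟨(x * z - a * y * w) / N, (y * z - x * w) / N, ?_⟩
  field_simp
  rw [hN]
  ring

theorem isDivisionRingPred_quaternionAlgebra_iff {a b : K} (h2 : (2 : K) ≠ 0) (ha : a ≠ 0) :
    IsDivisionRingPred ℍ[K,a,b] ↔ ∀ x y : K, x ^ 2 - a * y ^ 2 ≠ b := by
  simp only [isDivisionRingPred_quaternionAlgebra_iff_re_mul_star_ne_zero,
    re_mul_star_quaternionAlgebra]
  refine ⟨fun h x y hxy => h ⟨x, y, 1, 0⟩ ?_ (by simp [hxy]), fun h q hq hnorm => hq ?_⟩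
  · exact fun h0 => one_ne_zero (congrArg QuaternionAlgebra.imJ h0)
  · have hsq : ¬ IsSquare a := fun hsq =>
      let ⟨x, y, hxy⟩ := exists_sq_sub_mul_sq_eq_of_isSquare h2 ha hsq b
      h x y hxy
    have hJK : q.imJ ^ 2 - a * q.imK ^ 2 = 0 := by
      by_contra hne
      obtain ⟨u, v, huv⟩ := exists_sq_sub_mul_sq_eq_div hne q.re q.imI
      exact h u v (huv.trans ((div_eq_iff hne).2 (sub_eq_zero.1 hnorm)))
    obtain ⟨hJ, hK⟩ := eq_zero_and_eq_zero_of_sq_sub_mul_sq_eq_zero hsq hJK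
    obtain ⟨hre, hI⟩ := eq_zero_and_eq_zero_of_sq_sub_mul_sq_eq_zero hsq
      (by simpa only [hJK, mul_zero, sub_zero] using hnorm)
    exact QuaternionAlgebra.ext hre hI hJ hK

theorem isDivisionRingPred_quaternionAlgebra_of_neg [LinearOrder K] [IsStrictOrderedRing K]
    {a b : K} (ha : a < 0) (hb : b < 0) : IsDivisionRingPred ℍ[K,a,b] :=
  (isDivisionRingPred_quaternionAlgebra_iff two_ne_zero ha.ne).2 fun x y => ne_of_gt <|
    hb.trans_le <| sub_nonneg.2 <|
      (mul_nonpos_of_nonpos_of_nonneg ha.le (sq_nonneg y)).trans (sq_nonneg x)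

end QuaternionAlgebra

section Unramified

theorem norm_sq_add_mul_mul_add_mul_sq {K : Type*} [NormedField K] [IsUltrametricDist K]
    {t n : K} (h : ∀ u : K, ‖u‖ ≤ 1 → ‖u ^ 2 + t * u + n‖ = 1) (x y : K) :
    ‖x ^ 2 + t * x * y + n * y ^ 2‖ = max ‖x‖ ‖y‖ ^ 2 := by
  rcases le_or_gt ‖x‖ ‖y‖ with hxy | hxy
  · rw [max_eq_right hxy]
    rcases eq_or_ne y 0 with rfl | hy
    · simpa using hxy
    have hu : ‖x / y‖ ≤ 1 := by
      rw [norm_div]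
      exact div_le_one_of_le₀ hxy (norm_nonneg y)
    have hscale : x ^ 2 + t * x * y + n * y ^ 2 = ((x / y) ^ 2 + t * (x / y) + n) * y ^ 2 := by
      field_simp
    rw [hscale, norm_mul, h _ hu, one_mul, norm_pow]
  · have hn : ‖n‖ = 1 := by simpa using h 0 (by simp)
    have ht : ‖t‖ ≤ 1 := by
      have hbound := IsUltrametricDist.norm_add_le_max (1 + t + n) (-(1 + n))
      have h1 : ‖1 + t + n‖ = 1 := by simpa using h 1 (by simp)
      have h1n : ‖1 + n‖ ≤ 1 := by simpa [hn] using IsUltrametricDist.norm_add_le_max 1 n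
      rwa [h1, norm_neg, max_eq_left h1n, show 1 + t + n + -(1 + n) = t by ring] at hbound
    have htxny : ‖t * x + n * y‖ ≤ ‖x‖ := by
      refine (IsUltrametricDist.norm_add_le_max _ _).trans (max_le ?_ ?_)
      · simpa using mul_le_mul_of_nonneg_right ht (norm_nonneg x)
      · simpa [hn] using hxy.le
    have hlt : ‖y * (t * x + n * y)‖ < ‖x ^ 2‖ := by
      rw [norm_mul, norm_pow, sq]
      exact mul_lt_mul_of_lt_of_le_of_nonneg_of_pos hxy htxny (norm_nonneg y)
        ((norm_nonneg y).trans_lt hxy)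
    rw [show x ^ 2 + t * x * y + n * y ^ 2 = x ^ 2 + y * (t * x + n * y) by ring,
      IsUltrametricDist.norm_add_eq_max_of_norm_ne_norm hlt.ne', max_eq_left hlt.le,
      max_eq_left hxy.le, norm_pow]

variable {q : ℕ} [Fact q.Prime]

theorem norm_padicInt_eq_one_iff_toZMod_ne_zero {x : ℤ_[q]} :
    ‖x‖ = 1 ↔ PadicInt.toZMod x ≠ 0 := by
  rw [← PadicInt.isUnit_iff, ← IsLocalRing.notMem_maximalIdeal, ← PadicInt.ker_toZMod,
    RingHom.mem_ker]

theorem norm_padic_sq_add_mul_mul_add_mul_sq {t n : ℤ}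
    (h : ∀ u : ZMod q, u ^ 2 + t * u + n ≠ 0) (x y : ℚ_[q]) :
    ‖x ^ 2 + t * x * y + n * y ^ 2‖ = max ‖x‖ ‖y‖ ^ 2 := by
  refine norm_sq_add_mul_mul_add_mul_sq (fun u hu => ?_) x y
  obtain ⟨u, rfl⟩ : ∃ v : ℤ_[q], (v : ℚ_[q]) = u := ⟨⟨u, hu⟩, rfl⟩
  have hunit : ‖u ^ 2 + t * u + n‖ = 1 :=
    norm_padicInt_eq_one_iff_toZMod_ne_zero.2 (by simpa using h (PadicInt.toZMod u))
  simpa [PadicInt.norm_def] using hunit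

theorem norm_padic_sq_ne_inv (x : ℚ_[q]) : ‖x‖ ^ 2 ≠ (q : ℝ)⁻¹ := by
  have hq : 1 < (q : ℝ) := mod_cast (Fact.out : q.Prime).one_lt
  rcases eq_or_ne x 0 with rfl | hx
  · simpa using (zero_lt_one.trans hq).ne
  rw [Padic.norm_eq_zpow_neg_valuation hx, ← zpow_natCast, ← zpow_mul, ← zpow_neg_one]
  intro h
  have := zpow_right_injective₀ (zero_lt_one.trans hq) hq.ne' h
  push_cast at this
  omega

theorem norm_padic_sq_add_mul_mul_add_mul_sq_ne_inv {t n : ℤ}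
    (h : ∀ u : ZMod q, u ^ 2 + t * u + n ≠ 0) (x y : ℚ_[q]) :
    ‖x ^ 2 + t * x * y + n * y ^ 2‖ ≠ (q : ℝ)⁻¹ := by
  rw [norm_padic_sq_add_mul_mul_add_mul_sq h]
  rcases max_choice ‖x‖ ‖y‖ with hmax | hmax <;> rw [hmax] <;> exact norm_padic_sq_ne_inv _

theorem norm_padic_sq_sub_mul_sq_ne_inv {a : ℤ} (ha : ¬ IsSquare (a : ZMod q)) (x y : ℚ_[q]) :
    ‖x ^ 2 - a * y ^ 2‖ ≠ (q : ℝ)⁻¹ := by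
  have hroot : ∀ u : ZMod q, u ^ 2 + (0 : ℤ) * u + (-a : ℤ) ≠ 0 := fun u hu =>
    ha ⟨u, by push_cast at hu; linear_combination -hu⟩
  simpa [sub_eq_add_neg] using norm_padic_sq_add_mul_mul_add_mul_sq_ne_inv hroot x y

theorem exists_odd_one_sub_four_mul_eq {a : ℤ} (ha : a % 8 = 5) :
    ∃ n : ℤ, Odd n ∧ 1 - 4 * n = a :=
  ⟨(1 - a) / 4, Int.odd_iff.2 (by omega), by omega⟩

theorem norm_padic_two_sq_sub_mul_sq_ne_inv {a : ℤ} (ha : a % 8 = 5) (x y : ℚ_[2]) :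
    ‖x ^ 2 - a * y ^ 2‖ ≠ 2⁻¹ := by
  obtain ⟨n, hn, rfl⟩ := exists_odd_one_sub_four_mul_eq ha
  have hn1 : (n : ZMod 2) = 1 := ZMod.intCast_eq_one_iff_odd.2 hn
  have hroot : ∀ u : ZMod 2, u ^ 2 + (1 : ℤ) * u + n ≠ 0 := by
    rw [hn1]
    decide
  have hform : x ^ 2 - (1 - 4 * n : ℤ) * y ^ 2 =
      (x - y) ^ 2 + (1 : ℤ) * (x - y) * (2 * y) + n * (2 * y) ^ 2 := by
    push_cast
    ring
  rw [hform]
  exact_mod_cast norm_padic_sq_add_mul_mul_add_mul_sq_ne_inv hroot (x - y) (2 * y)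

theorem norm_padic_natCast_of_squarefree {d : ℕ} (hd : Squarefree d) (hqd : q ∣ d) :
    ‖(d : ℚ_[q])‖ = (q : ℝ)⁻¹ := by
  obtain ⟨m, rfl⟩ := hqd
  have hqm : q.Coprime m := Nat.coprime_of_squarefree_mul hd
  rw [Nat.cast_mul, norm_mul, Padic.norm_p, Padic.norm_natCast_eq_one_iff.2 hqm, mul_one]

end Unramified

open Polynomial in
theorem exists_sq_sub_mul_sq_eq_of_finite {k : Type*} [Field k] [Finite k] {a : k} (ha : a ≠ 0)
    (b : k) : ∃ x y : k, x ^ 2 - a * y ^ 2 = b := by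
  have := Fintype.ofFinite k
  by_cases hchar : ringChar k = 2
  · obtain ⟨x, hx⟩ := FiniteField.isSquare_of_char_two hchar b
    exact ⟨x, 0, by linear_combination -hx⟩
  have hcard : Fintype.card k % 2 = 1 := FiniteField.odd_card_of_char_ne_two hchar
  obtain ⟨x, y, hxy⟩ := FiniteField.exists_root_sum_quadratic (f := X ^ 2 + C (-b))
    (g := C (-a) * X ^ 2) (degree_X_pow_add_C two_pos _)
    (degree_C_mul_X_pow 2 (neg_ne_zero.2 ha)) hcard
  simp only [eval_add, eval_mul, eval_pow, eval_X, eval_C] at hxy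
  exact ⟨x, y, by linear_combination hxy⟩

section Henselian

universe u

variable {R k : Type u} [CommRing R] [HenselianLocalRing R] [Field k] {φ : R →+* k}

open Polynomial in
theorem exists_sq_add_mul_add_eq_zero_of_map (hφ : Function.Surjective φ) {t n : R} {s : k}
    (hroot : s ^ 2 + φ t * s + φ n = 0) (hsimple : 2 * s + φ t ≠ 0) :
    ∃ x : R, x ^ 2 + t * x + n = 0 := by
  have hensel := ((HenselianLocalRing.TFAE R).out 0 2).1 ‹HenselianLocalRing R›
  have hmonic : (X ^ 2 + C t * X + C n).Monic := by monicity!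
  obtain ⟨x, hx, -⟩ := hensel φ hφ _ hmonic s (by simpa [eval₂_pow] using hroot)
    (by simpa [one_add_one_eq_two, map_ofNat] using hsimple)
  exact ⟨x, by simpa using hx⟩

theorem isSquare_of_isSquare_map (hφ : Function.Surjective φ) (h2 : (2 : k) ≠ 0) {b : R}
    (hb : φ b ≠ 0) (hsq : IsSquare (φ b)) : IsSquare b := by
  obtain ⟨s, hs⟩ := hsq
  have hs0 : s ≠ 0 := left_ne_zero_of_mul (hs ▸ hb)
  obtain ⟨x, hx⟩ := exists_sq_add_mul_add_eq_zero_of_map (t := 0) (n := -b) (s := s) hφ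
    (by simp [hs, sq]) (by simpa using mul_ne_zero h2 hs0)
  exact ⟨x, by linear_combination -hx⟩

theorem exists_sq_sub_mul_sq_eq_of_map_ne_zero [Finite k] (hφ : Function.Surjective φ)
    (h2 : (2 : k) ≠ 0) {a b : R} (ha : φ a ≠ 0) (hb : φ b ≠ 0) :
    ∃ x y : R, x ^ 2 - a * y ^ 2 = b := by
  obtain ⟨x₀, y₀, h₀⟩ := exists_sq_sub_mul_sq_eq_of_finite ha (φ b)
  obtain ⟨x, rfl⟩ := hφ x₀
  obtain ⟨y, rfl⟩ := hφ y₀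
  -- A root modulo the maximal ideal is simple in `x` or in `y`; lift in that variable.
  by_cases hx : φ x = 0
  · have hφloc : IsLocalHom φ := .of_surjective φ hφ
    obtain ⟨a', haa'⟩ := (isUnit_of_map_unit φ a (IsUnit.mk0 _ ha)).exists_right_inv
    have hφa : φ a * φ a' = 1 := by rw [← map_mul, haa', map_one]
    have hy : φ y ^ 2 = φ (a' * (x ^ 2 - b)) := by
      simp only [map_mul, map_sub, map_pow]
      linear_combination -(φ a') * h₀ - φ y ^ 2 * hφa
    have hy0 : φ y ≠ 0 := fun hy0 => hb (by simpa [hx, hy0] using h₀.symm)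
    obtain ⟨z, hz⟩ := isSquare_of_isSquare_map hφ h2 (hy ▸ pow_ne_zero 2 hy0)
      (hy ▸ IsSquare.sq (φ y))
    exact ⟨x, z, by linear_combination a * hz + (b - x ^ 2) * haa'⟩
  · have hx' : φ x ^ 2 = φ (b + a * y ^ 2) := by
      simp only [map_add, map_mul, map_pow]
      linear_combination h₀
    obtain ⟨z, hz⟩ := isSquare_of_isSquare_map hφ h2 (hx' ▸ pow_ne_zero 2 hx)
      (hx' ▸ IsSquare.sq (φ x))
    exact ⟨z, y, by linear_combination -hz⟩

end Henselian

section Padic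

variable {q : ℕ} [Fact q.Prime]

instance henselianLocalRing_padicInt : HenselianLocalRing ℤ_[q] where
  is_henselian f hf x hx hx' :=
    HenselianRing.is_henselian f hf x hx (hx'.map (Ideal.Quotient.mk _))

theorem toZMod_surjective : Function.Surjective (PadicInt.toZMod : ℤ_[q] →+* ZMod q) :=
  ZMod.ringHom_surjective _

theorem two_ne_zero_zmod_of_ne_two (hq : q ≠ 2) : (2 : ZMod q) ≠ 0 :=
  Ring.two_ne_zero (by rwa [ZMod.ringChar_zmod_n])

theorem isSquare_padic_intCast (hq : q ≠ 2) {b : ℤ} (hb : (b : ZMod q) ≠ 0)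
    (hsq : IsSquare (b : ZMod q)) : IsSquare (b : ℚ_[q]) := by
  have hlift : IsSquare (b : ℤ_[q]) := isSquare_of_isSquare_map toZMod_surjective
    (two_ne_zero_zmod_of_ne_two hq) (by simpa using hb) (by simpa using hsq)
  simpa using hlift.map (PadicInt.Coe.ringHom (p := q))

theorem exists_padic_sq_sub_mul_sq_eq (hq : q ≠ 2) {a b : ℤ} (ha : (a : ZMod q) ≠ 0)
    (hb : (b : ZMod q) ≠ 0) : ∃ x y : ℚ_[q], x ^ 2 - a * y ^ 2 = b := by
  obtain ⟨x, y, hxy⟩ := exists_sq_sub_mul_sq_eq_of_map_ne_zero (a := (a : ℤ_[q])) (b := b)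
    toZMod_surjective (two_ne_zero_zmod_of_ne_two hq) (by simpa using ha) (by simpa using hb)
  exact ⟨x, y, mod_cast congrArg ((↑) : ℤ_[q] → ℚ_[q]) hxy⟩

theorem exists_padic_two_sq_sub_mul_sq_eq {a b : ℤ} (ha : a % 8 = 5) (hb : Odd b) :
    ∃ x y : ℚ_[2], x ^ 2 - a * y ^ 2 = b := by
  obtain ⟨n, hn, rfl⟩ := exists_odd_one_sub_four_mul_eq ha
  have hnb : ((n - b : ℤ) : ZMod 2) = 0 :=
    ZMod.intCast_eq_zero_iff_even.2 (hn.sub_odd hb)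
  obtain ⟨z, hz⟩ := exists_sq_add_mul_add_eq_zero_of_map (t := (1 : ℤ_[2]))
    (n := ((n - b : ℤ) : ℤ_[2])) (s := 0) toZMod_surjective (by simpa using hnb) (by simp)
  have hz' : (z : ℚ_[2]) ^ 2 + z + (n - b) = 0 := by
    simpa using congrArg ((↑) : ℤ_[2] → ℚ_[2]) hz
  refine ⟨z + 1 / 2, 1 / 2, ?_⟩
  push_cast
  linear_combination hz'

end Padic

section Reciprocity

variable {p : ℕ} [Fact p.Prime]

theorem legendreSym_eq_legendreSym_neg {l : ℕ} [Fact l.Prime] (hp : p % 4 = 3) (hl : l ≠ 2) :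
    legendreSym p l = legendreSym l (-p) := by
  have hp2 : p ≠ 2 := by omega
  rw [legendreSym.at_neg hl]
  rcases Nat.odd_mod_four_iff.1 ((Fact.out : l.Prime).mod_two_eq_one_iff_ne_two.2 hl) with h | h
  · rw [ZMod.χ₄_nat_one_mod_four h, one_mul, legendreSym.quadratic_reciprocity_one_mod_four h hp2]
  · rw [ZMod.χ₄_nat_three_mod_four h, neg_one_mul,
      legendreSym.quadratic_reciprocity_three_mod_four h hp]

theorem legendreSym_eq_neg_one_of_not_isSquare_neg {l : ℕ} (hl : l.Prime) (hp : p % 8 = 3)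
    (h : Odd l → ¬ IsSquare (-(p : ZMod l))) : legendreSym p l = -1 := by
  have : Fact l.Prime := ⟨hl⟩
  rcases eq_or_ne l 2 with rfl | hl2
  · rw [legendreSym.eq_neg_one_iff', Nat.cast_ofNat, ZMod.exists_sq_eq_two_iff (by omega)]
    omega
  · rw [legendreSym_eq_legendreSym_neg (by omega) hl2, legendreSym.eq_neg_one_iff]
    simpa using h (hl.odd_of_ne_two hl2)

theorem isSquare_neg_prod_of_legendreSym_eq_neg_one {ι : Type*} [Fintype ι]
    (hι : Odd (Fintype.card ι)) (hp : p % 4 = 3) {ps : ι → ℕ}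
    (h : ∀ i, legendreSym p (ps i) = -1) : IsSquare (-((∏ i, ps i : ℕ) : ZMod p)) := by
  have hprod : legendreSym p (∏ i, ps i : ℕ) = -1 := by
    calc legendreSym p (∏ i, ps i : ℕ) = ∏ i, legendreSym p (ps i) := by
          simp only [legendreSym, Nat.cast_prod, Int.cast_prod, map_prod]
      _ = -1 := by simp only [h, Finset.prod_const, Finset.card_univ, hι.neg_one_pow]
  have hneg : legendreSym p (-(∏ i, ps i : ℕ)) = 1 := by
    rw [legendreSym.at_neg (by omega), ZMod.χ₄_nat_three_mod_four hp, hprod, neg_mul_neg, one_mul]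
  have hne : ((-(∏ i, ps i : ℕ) : ℤ) : ZMod p) ≠ 0 := fun h0 => by
    rw [(legendreSym.eq_zero_iff p _).2 h0] at hneg
    exact zero_ne_one hneg
  simpa only [Int.cast_neg, Int.cast_natCast] using (legendreSym.eq_one_iff p hne).1 hneg

end Reciprocity

theorem squarefree_prod_of_prime_of_injective {ι : Type*} [Fintype ι] {ps : ι → ℕ}
    (hps : ∀ i, (ps i).Prime) (hinj : Function.Injective ps) : Squarefree (∏ i, ps i) :=
  Finset.squarefree_prod_of_pairwise_isCoprime
    (fun i _ j _ hij => Nat.coprime_iff_isRelPrime.1 <|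
      (Nat.coprime_primes (hps i) (hps j)).2 (hinj.ne hij))
    fun i _ => (hps i).squarefree

section LocalConditions

variable {q p d : ℕ} [Fact q.Prime]

theorem isDivisionRingPred_padic_of_dvd (hd : Squarefree d) (hqd : q ∣ d) (hp : p % 8 = 3)
    (hq : Odd q → ¬ IsSquare (-(p : ZMod q))) :
    IsDivisionRingPred ℍ[ℚ_[q], -(p : ℚ_[q]), -(d : ℚ_[q])] := by
  have hp0 : (p : ℚ_[q]) ≠ 0 := Nat.cast_ne_zero.2 (by omega)
  refine (isDivisionRingPred_quaternionAlgebra_iff two_ne_zero (neg_ne_zero.2 hp0)).2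
    fun x y hxy => ?_
  have hnorm : ‖x ^ 2 - (-p : ℤ) * y ^ 2‖ = (q : ℝ)⁻¹ := by
    rw [Int.cast_neg, Int.cast_natCast, hxy, norm_neg, norm_padic_natCast_of_squarefree hd hqd]
  rcases eq_or_ne q 2 with rfl | hq2
  · exact norm_padic_two_sq_sub_mul_sq_ne_inv (by omega) x y (mod_cast hnorm)
  · have hnonres : ¬ IsSquare ((-p : ℤ) : ZMod q) := by
      simpa using hq ((Fact.out : q.Prime).odd_of_ne_two hq2)
    exact norm_padic_sq_sub_mul_sq_ne_inv hnonres x y hnorm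

theorem exists_padic_sq_sub_neg_mul_sq_eq_neg_of_not_dvd [Fact p.Prime] (hp : p % 8 = 3)
    (hd : IsSquare (-(d : ZMod p))) (hqd : ¬ q ∣ d) :
    ∃ x y : ℚ_[q], x ^ 2 - (-p : ℤ) * y ^ 2 = (-d : ℤ) := by
  have hd0 : ((-d : ℤ) : ZMod q) ≠ 0 := by simpa [ZMod.natCast_eq_zero_iff] using hqd
  rcases eq_or_ne q 2 with rfl | hq2
  · exact exists_padic_two_sq_sub_mul_sq_eq (by omega) (by simpa [← even_iff_two_dvd] using hqd)
  rcases eq_or_ne q p with rfl | hqp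
  · obtain ⟨x, hx⟩ := isSquare_padic_intCast hq2 hd0 (by simpa using hd)
    exact ⟨x, 0, by linear_combination -hx⟩
  · have hp0 : ((-p : ℤ) : ZMod q) ≠ 0 := by
      simpa [ZMod.natCast_eq_zero_iff, Nat.prime_dvd_prime_iff_eq Fact.out Fact.out] using hqp
    exact exists_padic_sq_sub_mul_sq_eq hq2 hp0 hd0

theorem not_isDivisionRingPred_padic_of_not_dvd [Fact p.Prime] (hp : p % 8 = 3)
    (hd : IsSquare (-(d : ZMod p))) (hqd : ¬ q ∣ d) :
    ¬ IsDivisionRingPred ℍ[ℚ_[q], -(p : ℚ_[q]), -(d : ℚ_[q])] := by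
  have hp0 : (p : ℚ_[q]) ≠ 0 := Nat.cast_ne_zero.2 (by omega)
  obtain ⟨x, y, hxy⟩ := exists_padic_sq_sub_neg_mul_sq_eq_neg_of_not_dvd hp hd hqd
  rw [isDivisionRingPred_quaternionAlgebra_iff two_ne_zero (neg_ne_zero.2 hp0)]
  exact fun h => h x y (mod_cast hxy)

end LocalConditions

theorem stmt_8 (r : ℕ) (hr : 1 ≤ r) (ps : Fin (2 * r - 1) → ℕ)
    (hps : ∀ i, (ps i).Prime) (hinj : Function.Injective ps)
    (d : ℕ) (hd : d = ∏ i, ps i)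
    (p : ℕ) (hp : p.Prime) (hpd : ¬ p ∣ d) (hp8 : p % 8 = 3)
    (hnr : ∀ i, Odd (ps i) → ¬ IsSquare (-(p : ZMod (ps i)))) :
    (∀ (q : ℕ) [Fact q.Prime],
      IsDivisionRingPred ℍ[ℚ_[q], -(p : ℚ_[q]), -(d : ℚ_[q])] ↔ q ∣ d) ∧
    IsDivisionRingPred ℍ[ℝ, -(p : ℝ), -(d : ℝ)] := by
  have : Fact p.Prime := ⟨hp⟩
  have hd_sqf : Squarefree d := hd ▸ squarefree_prod_of_prime_of_injective hps hinj
  have hd_sq : IsSquare (-(d : ZMod p)) := hd ▸ isSquare_neg_prod_of_legendreSym_eq_neg_one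
    (by simpa using ⟨r - 1, by omega⟩) (by omega)
    fun i => legendreSym_eq_neg_one_of_not_isSquare_neg (hps i) hp8 (hnr i)
  refine ⟨fun q hq => ⟨fun h => ?_, fun hqd => ?_⟩, ?_⟩
  · by_contra hqd
    exact not_isDivisionRingPred_padic_of_not_dvd hp8 hd_sq hqd h
  · obtain ⟨i, -, hi⟩ := hq.out.prime.exists_mem_finset_dvd (hd ▸ hqd)
    obtain rfl : q = ps i := (Nat.prime_dvd_prime_iff_eq hq.out (hps i)).1 hi
    exact isDivisionRingPred_padic_of_dvd hd_sqf hqd hp8 (hnr i)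
  · exact isDivisionRingPred_quaternionAlgebra_of_neg (neg_lt_zero.2 (mod_cast hp.pos))
      (neg_lt_zero.2 (mod_cast hd_sqf.ne_zero.bot_lt))
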